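/- Let A be a set with a length function μ and let w be an element of the free group F(A), represented by a word 𝐰 in the alphabet A ⊔ A⁻¹. Then the word norm satisfies ‖w‖_{F(A;μ)} = min{ μ(𝐮) : 𝐮 is a cancellation sequence in 𝐰 }; in particular the right-hand side is independent of the choice of representing word 𝐰, and the minimum is attained. -/

import Mathlib

/-!
Deleting a symbol `x` from a word changes the group element by a conjugate of `x^{±1}`, so a
cancellation sequence exhibits the element as a product of conjugates of generators of the same
total length. Conversely, a product of conjugates `u a u⁻¹` is represented by a word in which the
middle letters `a` form a cancellation sequence of the same total length.

It remains to pass from one representing word `w` to another one `v`. As `w v⁻¹ v` freely reduces to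
`v`, it suffices to see that the minimal length of a cancellation sequence does not grow when a pair
`x x⁻¹` is removed; after a cyclic rotation this pair is at the front of the word. The only
interesting case is that exactly one symbol of the pair is deleted: the surviving one cancels
against a symbol of the same length in the rest of the word, which can be deleted instead.
-/

/-- The set of total lengths of expressions of `g` as a product of conjugates
of generators `gen i ^ {±1}`, each weighted by the length function `ℓ`. -/
def wordNormSet {G : Type*} [Group G] {I : Type*}
    (gen : I → G) (ℓ : I → ℝ) (g : G) : Set ℝ :=
  { x | ∃ l : List (G × I × Bool),
      g = (l.map fun p => p.1 * (if p.2.2 then gen p.2.1 else (gen p.2.1)⁻¹) * p.1⁻¹).prod ∧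
      x = (l.map fun p => ℓ p.2.1).sum }

/-- The conjugation-invariant word norm associated to a length function. -/
noncomputable def wordNorm {G : Type*} [Group G] {I : Type*}
    (gen : I → G) (ℓ : I → ℝ) (g : G) : ℝ :=
  sInf (wordNormSet gen ℓ g)

/-- The word obtained from `w` by deleting the symbols at the positions in `s`. -/
def deleteSeq {α : Type*} (w : List (α × Bool)) (s : Finset (Fin w.length)) :
    List (α × Bool) :=
  ((List.finRange w.length).filter (fun i => i ∉ s)).map w.get

section Words

open List

variable {α : Type*} {w v : List (α × Bool)} {x : α × Bool}

theorem red_nil_iff_mk_eq_one : FreeGroup.Red w [] ↔ FreeGroup.mk w = 1 := by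
  rw [FreeGroup.one_eq_mk, FreeGroup.Red.exact]
  refine ⟨fun h => ⟨[], h, .refl⟩, ?_⟩
  rintro ⟨u, hw, hu⟩
  rwa [FreeGroup.Red.nil_iff.1 hu] at hw

theorem mk_append_eq_one_comm : FreeGroup.mk (w ++ v) = 1 ↔ FreeGroup.mk (v ++ w) = 1 := by
  rw [← FreeGroup.mul_mk, ← FreeGroup.mul_mk, mul_eq_one_comm]

theorem mk_append_invRev_eq_one : FreeGroup.mk (w ++ FreeGroup.invRev w) = 1 := by
  rw [← FreeGroup.mul_mk, ← FreeGroup.inv_mk, mul_inv_cancel]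

theorem exists_append_cons_of_red_cons (h : FreeGroup.Red w (x :: v)) :
    ∃ p q, w = p ++ x :: q ∧ FreeGroup.Red p [] ∧ FreeGroup.Red q v := by
  induction hn : w.length using Nat.strong_induction_on generalizing w with
  | _ n ih =>
  subst hn
  cases w with
  | nil => simp [FreeGroup.Red.nil_iff] at h
  | cons y w =>
    by_cases hyx : y = x
    · subst hyx
      exact ⟨[], w, rfl, .refl, (FreeGroup.Red.cons_cons_iff y).1 h⟩
    · -- Since `y` does not survive, `w` reduces to `y⁻¹ x v`: the part of `w` reducing to `y⁻¹`
      -- cancels `y`, and the search for `x` goes on in the remaining part.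
      have hw : FreeGroup.Red w ([(y.1, !y.2)] ++ x :: v) := FreeGroup.Red.inv_of_red_of_ne hyx h
      obtain ⟨r, s, rfl, hr, hs⟩ := FreeGroup.Red.to_append_iff.1 hw
      have hlt : s.length < (y :: (r ++ s)).length := by
        simp only [length_cons, length_append]
        lia
      obtain ⟨p, q, rfl, hp, hq⟩ := ih s.length hlt hs rfl
      exact ⟨y :: r ++ p, q, by simp,
        FreeGroup.Red.append_append (FreeGroup.Red.cons_nil_iff_singleton.2 hr) hp, hq⟩

theorem exists_eq_append_cons_of_mk_cons_eq_one (h : FreeGroup.mk (x :: w) = 1) :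
    ∃ p q, w = p ++ (x.1, !x.2) :: q ∧ FreeGroup.mk (p ++ q) = 1 := by
  obtain ⟨p, q, hw, hp, hq⟩ := exists_append_cons_of_red_cons
    (FreeGroup.Red.cons_nil_iff_singleton.1 (red_nil_iff_mk_eq_one.2 h))
  exact ⟨p, q, hw, red_nil_iff_mk_eq_one.1 (FreeGroup.Red.append_append hp hq)⟩

end Words

section CancellationLengths

open List

variable {α : Type*} {μ : α → ℝ} {w v : List (α × Bool)} {x : α × Bool} {c d : ℝ}

/-- The total length `μ(𝐰)` of a word `𝐰`, i.e. the sum of the lengths of its symbols. -/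
def totalLength (μ : α → ℝ) (w : List (α × Bool)) : ℝ :=
  (w.map fun x => μ x.1).sum

/-- The set of total lengths `μ(𝐮)` of the cancellation sequences `𝐮` in a word `𝐰`. A cancellation
sequence is encoded by the word `𝐯 = 𝐰 − 𝐮` left after its deletion, so that
`μ(𝐮) = μ(𝐰) − μ(𝐯)`. -/
def cancellationLengths (μ : α → ℝ) (w : List (α × Bool)) : Set ℝ :=
  {c | ∃ v, v <+ w ∧ FreeGroup.mk v = 1 ∧ c = totalLength μ w - totalLength μ v}

@[simp]
theorem totalLength_cons : totalLength μ (x :: w) = μ x.1 + totalLength μ w := by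
  simp [totalLength]

@[simp]
theorem totalLength_append :
    totalLength μ (w ++ v) = totalLength μ w + totalLength μ v := by
  simp [totalLength]

theorem cancellationLengths_nonempty : (cancellationLengths μ w).Nonempty :=
  ⟨_, [], w.nil_sublist, rfl, rfl⟩

theorem cancellationLengths_finite : (cancellationLengths μ w).Finite := by
  refine (w.sublists.finite_toSet.image fun v => totalLength μ w - totalLength μ v).subset ?_
  rintro _ ⟨v, hv, -, rfl⟩
  exact ⟨v, mem_sublists.2 hv, rfl⟩

theorem zero_mem_cancellationLengths (hw : FreeGroup.mk w = 1) : 0 ∈ cancellationLengths μ w :=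
  ⟨w, .refl w, hw, (sub_self _).symm⟩

theorem add_mem_cancellationLengths_append (hc : c ∈ cancellationLengths μ w)
    (hd : d ∈ cancellationLengths μ v) : c + d ∈ cancellationLengths μ (w ++ v) := by
  obtain ⟨w', hw, hw1, rfl⟩ := hc
  obtain ⟨v', hv, hv1, rfl⟩ := hd
  refine ⟨w' ++ v', hw.append hv, ?_, ?_⟩
  · rw [← FreeGroup.mul_mk, hw1, hv1, one_mul]
  · simp only [totalLength_append]
    ring

theorem add_mem_cancellationLengths_of_sublist (h : v <+ w) (hc : c ∈ cancellationLengths μ v) :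
    totalLength μ w - totalLength μ v + c ∈ cancellationLengths μ w := by
  obtain ⟨u, huv, hu, rfl⟩ := hc
  exact ⟨u, huv.trans h, hu, by ring⟩

theorem cancellationLengths_append_comm (w v : List (α × Bool)) :
    cancellationLengths μ (w ++ v) = cancellationLengths μ (v ++ w) := by
  suffices subset : ∀ w v : List (α × Bool),
      cancellationLengths μ (w ++ v) ⊆ cancellationLengths μ (v ++ w) from
    (subset w v).antisymm (subset v w)
  rintro w v _ ⟨u, hu, hu1, rfl⟩
  obtain ⟨p, q, rfl, hp, hq⟩ := sublist_append_iff.1 hu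
  exact ⟨q ++ p, hq.append hp, mk_append_eq_one_comm.1 hu1, by simp [add_comm]⟩

theorem mem_cancellationLengths_append_cons_invRev (u : List (α × Bool)) (x : α × Bool) :
    μ x.1 ∈ cancellationLengths μ (u ++ x :: FreeGroup.invRev u) :=
  ⟨u ++ FreeGroup.invRev u, by simp, mk_append_invRev_eq_one, by simp⟩

theorem mem_cancellationLengths_of_mk_cons_eq_one (h : FreeGroup.mk (x :: w) = 1) :
    μ x.1 ∈ cancellationLengths μ w := by
  obtain ⟨p, q, rfl, hpq⟩ := exists_eq_append_cons_of_mk_cons_eq_one h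
  refine ⟨p ++ q, by simp, hpq, ?_⟩
  simp only [totalLength_append, totalLength_cons]
  ring

theorem exists_le_mem_cancellationLengths_of_cons_cons (hμ : ∀ a, 0 ≤ μ a) {a : α} {b : Bool}
    (hc : c ∈ cancellationLengths μ ((a, b) :: (a, !b) :: w)) :
    ∃ d ∈ cancellationLengths μ w, d ≤ c := by
  obtain ⟨v, hv, hv1, rfl⟩ := hc
  have ha : 0 ≤ μ a := hμ a
  -- If exactly one symbol of the pair is deleted, delete the partner of the other one instead.
  have partner {b : Bool} {u : List (α × Bool)} (hu : u <+ w)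
      (hu1 : FreeGroup.mk ((a, b) :: u) = 1) :
      totalLength μ w - totalLength μ u + μ a ∈ cancellationLengths μ w :=
    add_mem_cancellationLengths_of_sublist hu (mem_cancellationLengths_of_mk_cons_eq_one hu1)
  rcases sublist_cons_iff.1 hv with hv' | ⟨v', rfl, hv'⟩ <;>
    rcases sublist_cons_iff.1 hv' with hu | ⟨u, rfl, hu⟩
  · exact ⟨_, ⟨v, hu, hv1, rfl⟩, by simp only [totalLength_cons]; linarith⟩
  · exact ⟨_, partner hu hv1, by simp only [totalLength_cons]; linarith⟩
  · exact ⟨_, partner hu hv1, by simp only [totalLength_cons]; linarith⟩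
  · have hu1 : FreeGroup.mk u = 1 := (Quot.sound FreeGroup.Red.Step.cons_not).symm.trans hv1
    exact ⟨_, ⟨u, hu, hu1, rfl⟩, by simp only [totalLength_cons]; linarith⟩

theorem exists_le_mem_cancellationLengths_of_red (hμ : ∀ a, 0 ≤ μ a)
    (h : FreeGroup.Red w v) (hc : c ∈ cancellationLengths μ w) :
    ∃ d ∈ cancellationLengths μ v, d ≤ c := by
  induction h with
  | refl => exact ⟨c, hc, le_rfl⟩
  | tail _ hstep ih =>
    obtain ⟨d, hd, hdc⟩ := ih
    obtain @⟨p, q, a, b⟩ := hstep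
    rw [cancellationLengths_append_comm] at hd
    obtain ⟨e, he, hed⟩ := exists_le_mem_cancellationLengths_of_cons_cons hμ hd
    rw [cancellationLengths_append_comm]
    exact ⟨e, he, hed.trans hdc⟩

theorem exists_le_mem_cancellationLengths_of_mk_eq (hμ : ∀ a, 0 ≤ μ a)
    (h : FreeGroup.mk w = FreeGroup.mk v) (hc : c ∈ cancellationLengths μ w) :
    ∃ d ∈ cancellationLengths μ v, d ≤ c := by
  -- `w v⁻¹ v` reduces to `v`, and keeping all of `v⁻¹ v` costs nothing.
  have hred : FreeGroup.Red ((w ++ FreeGroup.invRev v) ++ v) ([] ++ v) := by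
    refine FreeGroup.Red.append_append (red_nil_iff_mk_eq_one.2 ?_) .refl
    rw [← FreeGroup.mul_mk, h, FreeGroup.mul_mk, mk_append_invRev_eq_one]
  have hc' : c ∈ cancellationLengths μ ((w ++ FreeGroup.invRev v) ++ v) := by
    rw [append_assoc, ← add_zero c]
    exact add_mem_cancellationLengths_append hc
      (zero_mem_cancellationLengths (mk_append_eq_one_comm.1 mk_append_invRev_eq_one))
  exact exists_le_mem_cancellationLengths_of_red hμ hred hc'

theorem sublist_iff_exists_deleteSeq :
    v <+ w ↔ ∃ s : Finset (Fin w.length), v = deleteSeq w s := by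
  constructor
  · intro h
    obtain ⟨is, rfl, his⟩ := sublist_eq_map_getElem h
    refine ⟨Finset.univ.filter (· ∉ is), congrArg (map w.get) ?_⟩
    exact his.sortedLT.eq_of_mem_iff ((pairwise_lt_finRange _).filter _).sortedLT (by simp)
  · rintro ⟨s, rfl⟩
    simpa [deleteSeq] using (filter_sublist (p := (· ∉ s)) (l := finRange w.length)).map w.get

theorem totalLength_sub_totalLength_deleteSeq (s : Finset (Fin w.length)) :
    totalLength μ w - totalLength μ (deleteSeq w s) = ∑ i ∈ s, μ (w.get i).1 := by
  have hw : totalLength μ w = ∑ i, μ (w.get i).1 := by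
    conv_lhs => rw [← map_get_finRange w]
    rw [Fin.sum_univ_def, totalLength, map_map]
    rfl
  have hd : totalLength μ (deleteSeq w s) = ∑ i ∈ sᶜ, μ (w.get i).1 := by
    have hs : sᶜ = ((finRange w.length).filter (· ∉ s)).toFinset := by
      ext; simp
    rw [hs, sum_toFinset _ ((nodup_finRange _).filter _), totalLength, deleteSeq, map_map]
    rfl
  rw [hw, hd, sub_eq_iff_eq_add, Finset.sum_add_sum_compl]

theorem cancellationLengths_eq_setOf_deleteSeq :
    cancellationLengths μ w = {c | ∃ s : Finset (Fin w.length),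
      FreeGroup.mk (deleteSeq w s) = 1 ∧ c = ∑ i ∈ s, μ (w.get i).1} := by
  ext c
  constructor
  · rintro ⟨v, hv, hv1, rfl⟩
    obtain ⟨s, rfl⟩ := sublist_iff_exists_deleteSeq.1 hv
    exact ⟨s, hv1, totalLength_sub_totalLength_deleteSeq s⟩
  · rintro ⟨s, hs, rfl⟩
    exact ⟨_, sublist_iff_exists_deleteSeq.2 ⟨s, rfl⟩, hs,
      (totalLength_sub_totalLength_deleteSeq s).symm⟩

end CancellationLengths

section WordNormSet

open List

variable {G I : Type*} [Group G] {gen : I → G} {ℓ : I → ℝ} {g h : G} {c d : ℝ}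

theorem zero_mem_wordNormSet_one : 0 ∈ wordNormSet gen ℓ 1 :=
  ⟨[], rfl, rfl⟩

theorem add_mem_wordNormSet_mul (hc : c ∈ wordNormSet gen ℓ g) (hd : d ∈ wordNormSet gen ℓ h) :
    c + d ∈ wordNormSet gen ℓ (g * h) := by
  obtain ⟨k, rfl, rfl⟩ := hc
  obtain ⟨l, rfl, rfl⟩ := hd
  exact ⟨k ++ l, by simp, by simp⟩

theorem mem_wordNormSet_conj (k : G) (hc : c ∈ wordNormSet gen ℓ g) :
    c ∈ wordNormSet gen ℓ (k * g * k⁻¹) := by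
  obtain ⟨l, rfl, rfl⟩ := hc
  refine ⟨l.map fun p => (k * p.1, p.2), ?_, by simp [Function.comp_def]⟩
  rw [← MulAut.conj_apply, map_list_prod]
  simp [Function.comp_def, mul_assoc]

theorem lift_mk_singleton (x : I × Bool) :
    FreeGroup.lift gen (FreeGroup.mk [x]) = if x.2 then gen x.1 else (gen x.1)⁻¹ := by
  simp [Bool.cond_eq_ite]

theorem mem_wordNormSet_lift_mk_singleton (x : I × Bool) :
    ℓ x.1 ∈ wordNormSet gen ℓ (FreeGroup.lift gen (FreeGroup.mk [x])) :=
  ⟨[(1, x)], by rw [lift_mk_singleton]; simp, by simp⟩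

theorem totalLength_sub_totalLength_mem_wordNormSet {v w : List (I × Bool)} (h : v <+ w) :
    totalLength ℓ w - totalLength ℓ v ∈ wordNormSet gen ℓ
      (FreeGroup.lift gen (FreeGroup.mk w) * (FreeGroup.lift gen (FreeGroup.mk v))⁻¹) := by
  induction h with
  | slnil => simpa using zero_mem_wordNormSet_one
  | cons x _ ih =>
    simpa [mul_assoc, add_sub_assoc] using
      add_mem_wordNormSet_mul (mem_wordNormSet_lift_mk_singleton x) ih
  | cons_cons x _ ih =>
    simpa [mul_assoc] using mem_wordNormSet_conj (FreeGroup.lift gen (FreeGroup.mk [x])) ih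

end WordNormSet

section WordNorm

variable {α : Type*} {μ : α → ℝ} {w : List (α × Bool)} {c : ℝ}

theorem cancellationLengths_subset_wordNormSet :
    cancellationLengths μ w ⊆ wordNormSet FreeGroup.of μ (FreeGroup.mk w) := by
  rintro _ ⟨v, hv, hv1, rfl⟩
  simpa only [FreeGroup.lift_of_apply, hv1, inv_one, mul_one] using
    totalLength_sub_totalLength_mem_wordNormSet (gen := FreeGroup.of) hv

theorem mk_append_cons_invRev (u : List (α × Bool)) (x : α × Bool) :
    FreeGroup.mk (u ++ x :: FreeGroup.invRev u) = FreeGroup.mk u *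
      (if x.2 then FreeGroup.of x.1 else (FreeGroup.of x.1)⁻¹) * (FreeGroup.mk u)⁻¹ := by
  rw [← lift_mk_singleton, FreeGroup.lift_of_apply, FreeGroup.inv_mk, FreeGroup.mul_mk,
    FreeGroup.mul_mk, List.append_assoc, List.singleton_append]

theorem exists_mem_cancellationLengths_of_mem_wordNormSet {g : FreeGroup α}
    (hc : c ∈ wordNormSet FreeGroup.of μ g) :
    ∃ w, FreeGroup.mk w = g ∧ c ∈ cancellationLengths μ w := by
  obtain ⟨l, rfl, rfl⟩ := hc
  induction l with
  | nil => exact ⟨[], rfl, zero_mem_cancellationLengths rfl⟩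
  | cons p l ih =>
    obtain ⟨w, hw, hcw⟩ := ih
    obtain ⟨⟨u⟩, x⟩ := p
    refine ⟨u ++ x :: FreeGroup.invRev u ++ w, ?_,
      add_mem_cancellationLengths_append (mem_cancellationLengths_append_cons_invRev u x) hcw⟩
    rw [← FreeGroup.mul_mk, hw, mk_append_cons_invRev]
    rfl

theorem wordNorm_mk_eq_sInf_cancellationLengths (hμ : ∀ a, 0 ≤ μ a) (w : List (α × Bool)) :
    wordNorm FreeGroup.of μ (FreeGroup.mk w) = sInf (cancellationLengths μ w) := by
  refine csInf_eq_csInf_of_forall_exists_le (fun c hc => ?_)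
    fun c hc => ⟨c, cancellationLengths_subset_wordNormSet hc, le_rfl⟩
  obtain ⟨w', hw', hcw'⟩ := exists_mem_cancellationLengths_of_mem_wordNormSet hc
  exact exists_le_mem_cancellationLengths_of_mk_eq hμ hw' hcw'

end WordNorm

/-- for `w ∈ F(A)` represented by a word `𝐰` in the alphabet `A ⊔ A⁻¹`,
the word norm `‖w‖_{F(A;μ)}` equals the minimum of `μ(𝐮)` over all cancellation
sequences `𝐮` in `𝐰`, and the minimum is attained (in particular the right-hand side
only depends on the element `w` represented by `𝐰`). -/
theorem freeGroup_cancellation_norm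
    {α : Type*} (μ : α → ℝ) (hμ : ∀ a, 0 ≤ μ a)
    (w : List (α × Bool)) :
    IsLeast
      { x : ℝ | ∃ s : Finset (Fin w.length),
          FreeGroup.mk (deleteSeq w s) = 1 ∧
          x = ∑ i ∈ s, μ (w.get i).1 }
      (wordNorm FreeGroup.of μ (FreeGroup.mk w)) := by
  rw [← cancellationLengths_eq_setOf_deleteSeq, wordNorm_mk_eq_sInf_cancellationLengths hμ]
  exact ⟨cancellationLengths_nonempty.csInf_mem cancellationLengths_finite,
    fun _ hc => csInf_le cancellationLengths_finite.bddBelow hc⟩
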